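/- arXiv:1907.00296 — 4 statements merged into one kernel-verified Lean document; each statement's English description precedes it below -/
import Mathlib

section
/- Let γ : ℝ → ℝ² be a smooth (C^∞) curve parametrized by arc length, i.e. ‖γ'(t)‖ = 1 for all t, set x = γ(0), and suppose κ := ‖γ''(0)‖ > 0. Let r = 1/κ and let c = x + γ''(0)/κ² be the center of the osculating circle of γ at x. Then there exist constants C > 0 and ε > 0 such that for all s ∈ (0, ε), | r·arccos( ⟨x − c, γ(s) − c⟩ / (r ‖γ(s) − c‖) ) − s | ≤ C s⁴. -/
open RealInnerProductSpace

lemma aux_bound (h h' : ℝ → ℝ) (hd : ∀ t, HasDerivAt h (h' t) t) (h0 : h 0 = 0)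
    (M δ : ℝ) (hM : 0 ≤ M) (n : ℕ) (hb : ∀ t ∈ Set.Icc (0:ℝ) δ, |h' t| ≤ M * t ^ n) :
    ∀ t ∈ Set.Icc (0:ℝ) δ, |h t| ≤ M * t ^ (n+1) := by
  intro t ht
  have := Convex.norm_image_sub_le_of_norm_hasDerivWithin_le (f := h) (f' := h')
    (s := Set.Icc 0 t) (x := 0) (y := t) (C := M * t ^ n)
    (fun u _ => (hd u).hasDerivWithinAt) (fun u hu => by
      have h1 := hb u ⟨hu.1, hu.2.trans ht.2⟩
      have : u ^ n ≤ t ^ n := pow_le_pow_left₀ hu.1 hu.2 n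
      rw [Real.norm_eq_abs]
      exact h1.trans (mul_le_mul_of_nonneg_left this hM))
    (convex_Icc 0 t) ⟨le_rfl, ht.1⟩ ⟨ht.1, le_rfl⟩
  rw [h0, sub_zero, sub_zero, Real.norm_eq_abs, Real.norm_eq_abs, abs_of_nonneg ht.1] at this
  calc |h t| ≤ _ := this
    _ = _ := by ring

lemma aux_cont (h : ℝ → ℝ) (hc : Continuous h) :
    ∃ M, 0 ≤ M ∧ ∀ t ∈ Set.Icc (0:ℝ) 1, |h t| ≤ M * t ^ 0 := by
  obtain ⟨M, hM⟩ := (isCompact_Icc (a := (0:ℝ)) (b := 1)).exists_bound_of_continuousOn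
    hc.continuousOn
  refine ⟨|M|, abs_nonneg _, fun t ht => ?_⟩
  have := hM t ht
  rw [Real.norm_eq_abs] at this
  simpa using this.trans (le_abs_self M)

lemma aux_plane (y T U : EuclideanSpace ℝ (Fin 2)) (hT : ⟪T, T⟫ = 1) (hTU : ⟪U, T⟫ = 0) :
    ⟪y, U⟫ ^ 2 + ⟪U, U⟫ * ⟪y, T⟫ ^ 2 = ⟪U, U⟫ * ⟪y, y⟫ := by
  simp only [PiLp.inner_apply, Fin.sum_univ_two, RCLike.inner_apply, conj_trivial] at *
  have e0 : U 0 = -(U 1 * T 0 - U 0 * T 1) * T 1 := by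
    linear_combination (-U 0) * hT + T 0 * hTU
  have e1 : U 1 = (U 1 * T 0 - U 0 * T 1) * T 0 := by
    linear_combination (-U 1) * hT + T 1 * hTU
  generalize U 1 * T 0 - U 0 * T 1 = l at e0 e1
  rw [e0, e1]
  linear_combination (l^2 * (y 0 * T 0 + y 1 * T 1)^2) * hT

theorem stmt_2 (γ : ℝ → EuclideanSpace ℝ (Fin 2))
    (hγ : ContDiff ℝ (⊤ : ℕ∞) γ)
    (hunit : ∀ t : ℝ, ‖deriv γ t‖ = 1)
    (x : EuclideanSpace ℝ (Fin 2)) (hx : x = γ 0)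
    (κ : ℝ) (hκdef : κ = ‖deriv (deriv γ) 0‖) (hκ : 0 < κ)
    (r : ℝ) (hr : r = 1 / κ)
    (c : EuclideanSpace ℝ (Fin 2)) (hc : c = x + (κ ^ 2)⁻¹ • deriv (deriv γ) 0) :
    ∃ C > (0 : ℝ), ∃ ε > (0 : ℝ), ∀ s ∈ Set.Ioo (0 : ℝ) ε,
      |r * Real.arccos (⟪x - c, γ s - c⟫ / (r * ‖γ s - c‖)) - s| ≤ C * s ^ 4 := by
  have s1 : ContDiff ℝ (⊤ : ℕ∞) (deriv γ) := (contDiff_infty_iff_deriv.1 hγ).2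
  have s2 : ContDiff ℝ (⊤ : ℕ∞) (deriv (deriv γ)) := (contDiff_infty_iff_deriv.1 s1).2
  have s3 : ContDiff ℝ (⊤ : ℕ∞) (deriv (deriv (deriv γ))) := (contDiff_infty_iff_deriv.1 s2).2
  have s4 : ContDiff ℝ (⊤ : ℕ∞) (deriv (deriv (deriv (deriv γ)))) :=
    (contDiff_infty_iff_deriv.1 s3).2
  have d0 : ∀ t, HasDerivAt γ (deriv γ t) t := fun t =>
    ((contDiff_infty_iff_deriv.1 hγ).1 t).hasDerivAt
  have d1 : ∀ t, HasDerivAt (deriv γ) (deriv (deriv γ) t) t := fun t =>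
    ((contDiff_infty_iff_deriv.1 s1).1 t).hasDerivAt
  have d2 : ∀ t, HasDerivAt (deriv (deriv γ)) (deriv (deriv (deriv γ)) t) t := fun t =>
    ((contDiff_infty_iff_deriv.1 s2).1 t).hasDerivAt
  have d3 : ∀ t, HasDerivAt (deriv (deriv (deriv γ))) (deriv (deriv (deriv (deriv γ))) t) t :=
    fun t => ((contDiff_infty_iff_deriv.1 s3).1 t).hasDerivAt
  have c1 := s1.continuous
  have c2 := s2.continuous
  have c3 := s3.continuous
  have c4 := s4.continuous
  have c0 := hγ.continuous
  generalize deriv (deriv (deriv (deriv γ))) = γ4 at *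
  generalize deriv (deriv (deriv γ)) = γ3 at *
  generalize deriv (deriv γ) = γ2 at *
  generalize deriv γ = γ1 at *
  clear s1 s2 s3 s4 hγ
  have i11 : ∀ t, ⟪γ1 t, γ1 t⟫ = 1 := fun t => by
    rw [real_inner_self_eq_norm_sq, hunit]; norm_num
  have i21 : ∀ t, ⟪γ2 t, γ1 t⟫ = 0 := fun t => by
    have h1 := (d1 t).inner ℝ (d1 t)
    simp only [i11] at h1
    have h2 := h1.unique (hasDerivAt_const t (1:ℝ))
    rw [real_inner_comm (γ2 t) (γ1 t)] at h2
    linarith [real_inner_comm (γ2 t) (γ1 t)]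
  have i31 : ∀ t, ⟪γ3 t, γ1 t⟫ = - ⟪γ2 t, γ2 t⟫ := fun t => by
    have h1 := (d2 t).inner ℝ (d1 t)
    simp only [i21] at h1
    have h2 := h1.unique (hasDerivAt_const t (0:ℝ))
    linarith
  have iU : ⟪γ2 0, γ2 0⟫ = κ ^ 2 := by rw [real_inner_self_eq_norm_sq, hκdef]
  have y0 : γ 0 - c = - ((κ^2)⁻¹ • γ2 0) := by rw [hc, hx]; abel
  have dv : ∀ (v : EuclideanSpace ℝ (Fin 2)) (f f' : ℝ → EuclideanSpace ℝ (Fin 2)),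
      (∀ t, HasDerivAt f (f' t) t) → ∀ t, HasDerivAt (fun t => ⟪f t, v⟫) ⟪f' t, v⟫ t := by
    intro v f f' h t
    simpa using (h t).inner ℝ (hasDerivAt_const t v)
  have dy : ∀ t, HasDerivAt (fun t => γ t - c) (γ1 t) t := fun t => (d0 t).sub_const c
  set T := γ1 0 with hT
  set U := γ2 0 with hU
  have hκ2 : κ ^ 2 ≠ 0 := by positivity
  -- p
  obtain ⟨Mp, hMp, bp3⟩ := aux_cont (fun t => ⟪γ4 t, T⟫ + ⟪γ3 t, U⟫) (by fun_prop)
  have bp2 := aux_bound (fun t => ⟪γ3 t, T⟫ + ⟪γ2 t, U⟫) _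
    (fun t => (dv T _ _ d3 t).add (dv U _ _ d2 t))
    (by simp only [← hU]; rw [hT, i31, ← hU]; ring) Mp 1 hMp 0 bp3
  have bp1 := aux_bound (fun t => ⟪γ2 t, T⟫ + ⟪γ1 t, U⟫) _
    (fun t => (dv T _ _ d2 t).add (dv U _ _ d1 t))
    (by simp only [← hU, ← hT]; rw [real_inner_comm U T, hU, hT, i21]; ring) Mp 1 hMp _ bp2
  have bp := aux_bound (fun t => ⟪γ1 t, T⟫ + ⟪γ t - c, U⟫) _
    (fun t => (dv T _ _ d1 t).add (dv U _ _ dy t))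
    (by simp only [← hU, ← hT]; rw [y0, inner_neg_left, real_inner_smul_left, iU, hT, i11]
        field_simp; ring) Mp 1 hMp _ bp1
  -- q
  obtain ⟨Mq, hMq, bq2⟩ := aux_cont (fun t => κ^2 * ⟪γ2 t, T⟫ - ⟪γ3 t, U⟫) (by fun_prop)
  have bq1 := aux_bound (fun t => κ^2 * ⟪γ1 t, T⟫ - ⟪γ2 t, U⟫) _
    (fun t => ((dv T _ _ d1 t).const_mul (κ^2)).sub (dv U _ _ d2 t))
    (by simp only [← hU, ← hT]; rw [iU, hT, i11]; ring) Mq 1 hMq 0 bq2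
  have bq := aux_bound (fun t => κ^2 * ⟪γ t - c, T⟫ - ⟪γ1 t, U⟫) _
    (fun t => ((dv T _ _ dy t).const_mul (κ^2)).sub (dv U _ _ d1 t))
    (by simp only [← hU, ← hT]
        rw [y0, inner_neg_left, real_inner_smul_left, real_inner_comm U T, hU, hT, i21]; ring)
    Mq 1 hMq _ bq1
  -- b
  obtain ⟨Mb, hMb, bb1⟩ := aux_cont (fun t => κ * ⟪γ1 t, T⟫) (by fun_prop)
  have dB : ∀ t, HasDerivAt (fun t => κ * ⟪γ t - c, T⟫) (κ * ⟪γ1 t, T⟫) t :=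
    fun t => (dv T _ _ dy t).const_mul κ
  have B0 : κ * ⟪γ 0 - c, T⟫ = 0 := by
    rw [y0, inner_neg_left, real_inner_smul_left, hU, hT, i21]; ring
  have bb := aux_bound (fun t => κ * ⟪γ t - c, T⟫) _ dB B0 Mb 1 hMb 0 bb1
  have dA : ∀ t, HasDerivAt (fun t => -⟪γ t - c, U⟫) (-⟪γ1 t, U⟫) t :=
    fun t => (dv U _ _ dy t).neg
  have A0 : -⟪γ 0 - c, U⟫ = 1 := by
    rw [y0, inner_neg_left, real_inner_smul_left, iU]; field_simp
  obtain ⟨ε, hε, hεp⟩ : ∃ ε > 0, ∀ s, |s| < ε →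
      (1/2 < -⟪γ s - c, U⟫ ∧ -⟪γ s - c, U⟫ < 2) ∧ 0 < κ * ⟪γ1 s, T⟫ := by
    have ca : Continuous (fun s => -⟪γ s - c, U⟫) := by fun_prop
    have cb : Continuous (fun s => κ * ⟪γ1 s, T⟫) := by fun_prop
    have e1 := (ca.tendsto 0).eventually_lt_const (u := 2)
      (by show -⟪γ 0 - c, U⟫ < 2; rw [A0]; norm_num)
    have e2 := (ca.tendsto 0).eventually_const_lt (u := 1/2)
      (by show 1/2 < -⟪γ 0 - c, U⟫; rw [A0]; norm_num)
    have e3 := (cb.tendsto 0).eventually_const_lt (u := 0)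
      (by show 0 < κ * ⟪γ1 0, T⟫; rw [hT, i11]; linarith)
    obtain ⟨ε, hε, h⟩ := Metric.eventually_nhds_iff.1 ((e2.and e1).and e3)
    exact ⟨ε, hε, fun s hs => h (by simpa [Real.dist_eq] using hs)⟩
  have hplane : ∀ s, ⟪γ s - c, U⟫ ^ 2 + κ^2 * ⟪γ s - c, T⟫ ^ 2 = κ^2 * ‖γ s - c‖^2 := by
    intro s
    have := aux_plane (γ s - c) T U (i11 0) (i21 0)
    rwa [iU, real_inner_self_eq_norm_sq] at this
  set K := 4 * (2 * κ * Mp + Mq * Mb) with hK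
  have hK0 : 0 ≤ K := by positivity
  refine ⟨r * K + 1, by rw [hr]; positivity, min ε 1, by positivity, ?_⟩
  rintro s ⟨hs0, hs⟩
  have hsε := lt_of_lt_of_le hs (min_le_left _ _)
  have hs1 := lt_of_lt_of_le hs (min_le_right _ _)
  have hBs : 0 ≤ κ * ⟪γ s - c, T⟫ := by
    have hm : MonotoneOn (fun t => κ * ⟪γ t - c, T⟫) (Set.Icc 0 s) := by
      apply monotoneOn_of_deriv_nonneg (convex_Icc 0 s)
      · exact fun t _ => (dB t).continuousAt.continuousWithinAt
      · exact fun t _ => (dB t).differentiableAt.differentiableWithinAt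
      · intro t ht
        rw [interior_Icc] at ht
        rw [(dB t).deriv]
        exact (hεp t (by rw [abs_of_pos ht.1]; linarith [ht.2])).2.le
    have := hm ⟨le_rfl, hs0.le⟩ ⟨hs0.le, le_rfl⟩ hs0.le
    simp only [B0] at this
    exact this
  have hmain : |Real.arctan (κ * ⟪γ s - c, T⟫ / -⟪γ s - c, U⟫) - κ * s| ≤ K * s ^ 4 := by
    have := Convex.norm_image_sub_le_of_norm_hasDerivWithin_le
      (f := fun t => Real.arctan (κ * ⟪γ t - c, T⟫ / -⟪γ t - c, U⟫) - κ * t)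
      (f' := fun t => 1 / (1 + (κ * ⟪γ t - c, T⟫ / -⟪γ t - c, U⟫) ^ 2) *
        ((κ * ⟪γ1 t, T⟫ * -⟪γ t - c, U⟫ - κ * ⟪γ t - c, T⟫ * -⟪γ1 t, U⟫) /
          (-⟪γ t - c, U⟫)^2) - κ * 1)
      (s := Set.Icc 0 s) (x := 0) (y := s) (C := K * s ^ 3) ?_ ?_
      (convex_Icc 0 s) ⟨le_rfl, hs0.le⟩ ⟨hs0.le, le_rfl⟩
    · simp only [B0, zero_div, Real.arctan_zero, mul_zero, sub_zero, Real.norm_eq_abs,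
        abs_of_pos hs0] at this
      calc _ ≤ _ := this
        _ = _ := by ring
    · intro t ht
      have hp := hεp t (by rw [abs_of_nonneg ht.1]; linarith [ht.2])
      have hA : -⟪γ t - c, U⟫ ≠ 0 := by linarith [hp.1.1]
      exact ((((dB t).div (dA t) hA).arctan).sub
        ((hasDerivAt_id t).const_mul κ)).hasDerivWithinAt
    · intro t ht
      have hp := hεp t (by rw [abs_of_nonneg ht.1]; linarith [ht.2])
      have ht1 : t ∈ Set.Icc (0:ℝ) 1 := ⟨ht.1, by linarith [ht.2]⟩
      have h1 := bp t ht1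
      have h2 := bq t ht1
      have h3 := bb t ht1
      have hts : t ^ 3 ≤ s ^ 3 := pow_le_pow_left₀ ht.1 ht.2 3
      have hAg := hp.1
      have ht0 := ht.1
      clear hp
      rw [Real.norm_eq_abs]
      generalize ⟪γ t - c, T⟫ = b at *
      generalize ⟪γ t - c, U⟫ = a at *
      generalize ⟪γ1 t, T⟫ = b' at *
      generalize ⟪γ1 t, U⟫ = a' at *
      obtain ⟨A, rfl⟩ : ∃ A, a = -A := ⟨-a, by ring⟩
      rw [neg_neg] at *
      have hA : A ≠ 0 := by linarith [hAg.1]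
      have hD : 0 < A ^ 2 + (κ * b)^2 := by have := hAg.1; positivity
      have hD4 : 1/4 ≤ A ^ 2 + (κ * b)^2 := by nlinarith [hAg.1, sq_nonneg (κ * b)]
      have e : 1 / (1 + (κ * b / A) ^ 2) * ((κ * b' * A - κ * b * -a') / A ^ 2) - κ * 1
          = (κ * (b' + -A) * A - (κ ^ 2 * b - a') * (κ * b)) / (A ^ 2 + (κ * b)^2) := by
        have : 1 + (κ * b / A) ^ 2 = (A ^ 2 + (κ * b)^2) / A^2 := by field_simp
        rw [this]
        field_simp
        ring
      rw [e, abs_div, abs_of_pos hD, div_le_iff₀ hD]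
      have hAabs : |A| ≤ 2 := by rw [abs_le]; constructor <;> linarith [hAg.1, hAg.2]
      have n1 : |κ * (b' + -A) * A| ≤ κ * (Mp * t ^ 3) * 2 := by
        rw [abs_mul, abs_mul, abs_of_pos hκ]
        gcongr
      have n2 : |(κ ^ 2 * b - a') * (κ * b)| ≤ (Mq * t ^ 2) * (Mb * t ^ 1) := by
        rw [abs_mul]
        gcongr
      calc _ ≤ _ := abs_sub _ _
        _ ≤ κ * (Mp * t ^ 3) * 2 + (Mq * t ^ 2) * (Mb * t ^ 1) := add_le_add n1 n2
        _ = K * t ^ 3 * (1/4) := by rw [hK]; ring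
        _ ≤ K * s ^ 3 * (A ^ 2 + (κ * b)^2) := by gcongr
  have hp := (hεp s (by rw [abs_of_pos hs0]; exact hsε)).1
  have harc : Real.arccos (⟪x - c, γ s - c⟫ / (r * ‖γ s - c‖)) =
      Real.arctan (κ * ⟪γ s - c, T⟫ / -⟪γ s - c, U⟫) := by
    have hApos : 0 < -⟪γ s - c, U⟫ := by linarith [hp.1]
    rw [Real.arctan_eq_arccos (div_nonneg hBs hApos.le)]
    congr 1
    have h1 : 1 + (κ * ⟪γ s - c, T⟫ / -⟪γ s - c, U⟫) ^ 2
        = (κ * ‖γ s - c‖ / -⟪γ s - c, U⟫) ^ 2 := by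
      rw [div_pow, div_pow, mul_pow κ ‖γ s - c‖, ← hplane s]
      have : ⟪γ s - c, U⟫ ≠ 0 := by linarith
      field_simp
    rw [h1, Real.sqrt_sq (by positivity), inv_div, hx, y0, inner_neg_left, real_inner_smul_left,
      real_inner_comm, hr]
    field_simp
  rw [harc]
  have e : r * Real.arctan (κ * ⟪γ s - c, T⟫ / -⟪γ s - c, U⟫) - s =
      r * (Real.arctan (κ * ⟪γ s - c, T⟫ / -⟪γ s - c, U⟫) - κ * s) := by
    rw [hr]; field_simp
  have hr0 : 0 < r := by rw [hr]; positivity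
  rw [e, abs_mul, abs_of_pos hr0]
  have := mul_le_mul_of_nonneg_left hmain hr0.le
  have h4 : 0 ≤ s ^ 4 := by positivity
  linarith
end

section
/- Let γ : ℝ → ℝ^D be a smooth (C^∞) curve parametrized by arc length, i.e. ‖γ'(t)‖ = 1 for all t, set x = γ(0), and let n be a unit vector with ⟨n, γ'(0)⟩ = 0 such that γ''(0) = κ_y · n for some κ_y ∈ ℝ. Fix κ₀ > 0, let r = 1/κ₀ and c = x + r n. Then there exist constants C > 0 and ε > 0 such that for all s ∈ (0, ε), | r·arccos( ⟨x − c, γ(s) − c⟩ / (r ‖γ(s) − c‖) ) − ( s − (1/6)(κ_y − κ₀)(κ_y − 2κ₀) s³ ) | ≤ C s⁴. -/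
open RealInnerProductSpace

open Filter Topology Asymptotics in
theorem aux_scalar (κ κ₀ r : ℝ) (hκ₀ : 0 < κ₀) (hr : r = 1 / κ₀) (a w : ℝ → ℝ)
    (hw0 : ∀ s, 0 ≤ w s)
    (ha : (fun s => a s - κ * s ^ 2 / 2) =O[𝓝[>] 0] (fun s : ℝ => s ^ 3))
    (hw : (fun s => w s - (s - κ ^ 2 * s ^ 3 / 6)) =O[𝓝[>] 0] (fun s : ℝ => s ^ 4)) :
    (fun s => r * Real.arctan (w s / (r - a s)) -
      (s - (1 / 6) * (κ - κ₀) * (κ - 2 * κ₀) * s ^ 3)) =O[𝓝[>] 0] (fun s : ℝ => s ^ 4)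
    ∧ ∀ᶠ s in 𝓝[>] (0 : ℝ), 0 < r - a s := by
  have hrpos : 0 < r := by rw [hr]; positivity
  have hrk : r * κ₀ = 1 := by rw [hr]; field_simp
  have hcont : ∀ f : ℝ → ℝ, Continuous f → f =O[𝓝[>] 0] (fun _ => (1 : ℝ)) := by
    intro f hf
    exact ((hf.tendsto 0).mono_left nhdsWithin_le_nhds).isBigO_one ℝ
  have hpoly : ∀ (f : ℝ → ℝ) (k : ℕ), Continuous f →
      (fun s => f s * s ^ k) =O[𝓝[>] 0] (fun s : ℝ => s ^ k) := by
    intro f k hf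
    simpa using (hcont f hf).mul (isBigO_refl (fun s : ℝ => s ^ k) _)
  have hid : Tendsto (fun s : ℝ => s) (𝓝[>] 0) (𝓝 0) := nhdsWithin_le_nhds
  have hat : Tendsto a (𝓝[>] 0) (𝓝 0) := by
    have h1 : Tendsto (fun s : ℝ => a s - κ * s ^ 2 / 2) (𝓝[>] 0) (𝓝 0) := by
      apply ha.trans_tendsto
      simpa using hid.pow 3
    have h2 : Tendsto (fun s : ℝ => κ * s ^ 2 / 2) (𝓝[>] 0) (𝓝 0) := by
      simpa using ((hid.pow 2).const_mul κ).div_const 2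
    simpa using h1.add h2
  have hrt : Tendsto (fun s => r - a s) (𝓝[>] 0) (𝓝 r) := by
    simpa using hat.const_sub r
  have hpos : ∀ᶠ s in 𝓝[>] (0 : ℝ), 0 < r - a s := hrt.eventually_const_lt hrpos
  refine ⟨?_, hpos⟩
  have hinv : (fun s => (r - a s)⁻¹) =O[𝓝[>] 0] (fun _ : ℝ => (1 : ℝ)) :=
    (hrt.inv₀ hrpos.ne').isBigO_one ℝ
  set m : ℝ := κ₀ * κ / 2 - κ ^ 2 / 6 with hm
  set Z : ℝ → ℝ := fun s => κ₀ * s + κ₀ * m * s ^ 3 with hZ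
  set z : ℝ → ℝ := fun s => w s / (r - a s) with hz
  have hZ1 : Z =O[𝓝[>] 0] (fun s : ℝ => s ^ 1) := by
    have := hpoly (fun s => κ₀ + κ₀ * m * s ^ 2) 1 (by fun_prop)
    refine this.congr_left ?_
    intro s; simp only [hZ]; ring
  have e1 : (fun s => (s - κ ^ 2 * s ^ 3 / 6) - Z s * (r - κ * s ^ 2 / 2))
      =O[𝓝[>] 0] (fun s : ℝ => s ^ 4) := by
    have := hpoly (fun s => κ₀ * m * κ / 2 * s) 4 (by fun_prop)
    refine this.congr_left ?_
    intro s; simp only [hZ, hm]; linear_combination (s + (κ₀ * κ / 2 - κ ^ 2 / 6) * s^3) * hrk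
  have e2 : (fun s => Z s * (a s - κ * s ^ 2 / 2)) =O[𝓝[>] 0] (fun s : ℝ => s ^ 4) := by
    refine (hZ1.mul ha).congr_right ?_
    intro s; ring
  have e3 : (fun s => z s - Z s) =O[𝓝[>] 0] (fun s : ℝ => s ^ 4) := by
    have := ((hw.add e1).add e2).mul hinv
    refine this.congr' ?_ (by simp)
    filter_upwards [hpos] with s hs
    simp only [hz]
    field_simp
    ring
  have h41 : (fun s : ℝ => s ^ 4) =O[𝓝[>] 0] (fun s : ℝ => s ^ 1) := by
    have := hpoly (fun s => s ^ 3) 1 (by fun_prop)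
    refine this.congr_left ?_
    intro s; ring
  have hz1 : z =O[𝓝[>] 0] (fun s : ℝ => s ^ 1) := by
    refine ((e3.trans h41).add hZ1).congr_left ?_
    intro s; ring
  have h54 : (fun s : ℝ => s ^ 5) =O[𝓝[>] 0] (fun s : ℝ => s ^ 4) := by
    have := hpoly (fun s => s) 4 (by fun_prop)
    refine this.congr_left ?_
    intro s; ring
  have h64 : (fun s : ℝ => s ^ 6) =O[𝓝[>] 0] (fun s : ℝ => s ^ 4) := by
    have := hpoly (fun s => s ^ 2) 4 (by fun_prop)
    refine this.congr_left ?_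
    intro s; ring
  have earc : (fun s => Real.arctan (z s) - (z s - z s ^ 3 / 3))
      =O[𝓝[>] 0] (fun s : ℝ => s ^ 4) := by
    have h5 : (fun s => z s ^ 5) =O[𝓝[>] 0] (fun s : ℝ => s ^ 4) := by
      refine IsBigO.trans ?_ h54
      simpa using hz1.pow 5
    refine IsBigO.trans ?_ h5
    refine IsBigO.of_bound 1 ?_
    filter_upwards [hpos] with s hs
    have hzs : 0 ≤ z s := div_nonneg (hw0 s) hs.le
    have hd : ∀ t : ℝ, HasDerivAt (fun t => Real.arctan t - (t - t ^ 3 / 3))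
        (1 / (1 + t ^ 2) - (1 - (3 * t ^ 2) / 3)) t := by
      intro t
      have := (Real.hasDerivAt_arctan t).sub
        ((hasDerivAt_id' t).sub ((hasDerivAt_pow 3 t).div_const 3))
      exact this.congr_deriv (by norm_num)
    have hd5 : ∀ t : ℝ, HasDerivAt (fun t => t ^ 5 - (Real.arctan t - (t - t ^ 3 / 3)))
        (5 * t ^ 4 - (1 / (1 + t ^ 2) - (1 - (3 * t ^ 2) / 3))) t := by
      intro t
      have := (hasDerivAt_pow 5 t).sub (hd t)
      exact this.congr_deriv (by norm_num)
    have hval : ∀ t : ℝ, 1 / (1 + t ^ 2) - (1 - (3 * t ^ 2) / 3) = t ^ 4 / (1 + t ^ 2) := by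
      intro t; field_simp; ring
    have m1 : Monotone (fun t => Real.arctan t - (t - t ^ 3 / 3)) := by
      apply monotone_of_deriv_nonneg (fun t => (hd t).differentiableAt)
      intro t
      rw [(hd t).deriv, hval]
      positivity
    have m2 : Monotone (fun t => t ^ 5 - (Real.arctan t - (t - t ^ 3 / 3))) := by
      apply monotone_of_deriv_nonneg (fun t => (hd5 t).differentiableAt)
      intro t
      rw [(hd5 t).deriv, hval]
      have : t ^ 4 / (1 + t ^ 2) ≤ t ^ 4 := div_le_self (by positivity) (by nlinarith [sq_nonneg t])
      have : 0 ≤ t ^ 4 := by positivity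
      linarith
    have b1 := m1 hzs
    have b2 := m2 hzs
    simp at b1 b2
    rw [Real.norm_eq_abs, Real.norm_eq_abs, abs_of_nonneg (by linarith), abs_of_nonneg (by positivity)]
    linarith
  have ecube : (fun s => z s ^ 3 - Z s ^ 3) =O[𝓝[>] 0] (fun s : ℝ => s ^ 4) := by
    have hq : (fun s => z s ^ 2 + z s * Z s + Z s ^ 2) =O[𝓝[>] 0] (fun s : ℝ => s ^ 2) := by
      have q1 := hz1.pow 2
      have q2 := hz1.mul hZ1
      have q3 := hZ1.pow 2
      simp only [pow_one, ← pow_two] at q1 q2 q3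
      exact (q1.add q2).add q3
    have := e3.mul hq
    refine IsBigO.trans (this.congr (g₂ := fun s => s ^ 6) ?_ ?_) h64
    · intro s; ring
    · intro s; ring
  have epoly : (fun s => r * (Z s - Z s ^ 3 / 3) -
      (s - (1 / 6) * (κ - κ₀) * (κ - 2 * κ₀) * s ^ 3)) =O[𝓝[>] 0] (fun s : ℝ => s ^ 4) := by
    have := hpoly (fun s => - κ₀ ^ 2 / 3 * (3 * m * s + 3 * m ^ 2 * s ^ 3 + m ^ 3 * s ^ 5)) 4
      (by fun_prop)
    refine this.congr_left ?_
    intro s; simp only [hZ, hm]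
    generalize hM : κ₀ * κ / 2 - κ ^ 2 / 6 = M
    linear_combination (-(s + M * s ^ 3) + κ₀ ^ 2 * (s + M * s ^ 3) ^ 3 / 3) * hrk + s ^ 3 * hM
  have := ((earc.const_mul_left r).add (e3.const_mul_left r)).add
    ((ecube.const_mul_left (-r / 3)).add epoly)
  refine this.congr_left ?_
  intro s; ring

theorem aux_unit {E : Type*} [NormedAddCommGroup E] [InnerProductSpace ℝ E] (γ : ℝ → E)
    (hγ : ContDiff ℝ (⊤ : ℕ∞) γ) (hunit : ∀ t : ℝ, ‖deriv γ t‖ = 1) :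
    ⟪deriv γ 0, deriv (deriv (deriv γ)) 0⟫ = - ‖deriv (deriv γ) 0‖ ^ 2 := by
  have c1 : ContDiff ℝ (⊤ : ℕ∞) (deriv γ) := (contDiff_infty_iff_deriv.1 hγ).2
  have c2 : ContDiff ℝ (⊤ : ℕ∞) (deriv (deriv γ)) := (contDiff_infty_iff_deriv.1 c1).2
  have d1 : ∀ t, HasDerivAt (deriv γ) (deriv (deriv γ) t) t := fun t =>
    ((contDiff_infty_iff_deriv.1 c1).1 t).hasDerivAt
  have d2 : ∀ t, HasDerivAt (deriv (deriv γ)) (deriv (deriv (deriv γ)) t) t := fun t =>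
    ((contDiff_infty_iff_deriv.1 c2).1 t).hasDerivAt
  have h1 : ∀ t, ⟪deriv γ t, deriv (deriv γ) t⟫ = 0 := by
    intro t
    have h := (d1 t).inner ℝ (d1 t)
    have he : (fun t => ⟪deriv γ t, deriv γ t⟫) = fun _ => (1 : ℝ) := by
      funext t; rw [real_inner_self_eq_norm_sq, hunit]; norm_num
    rw [he] at h
    have := h.unique (hasDerivAt_const t (1 : ℝ))
    rw [real_inner_comm (deriv γ t)] at this
    rw [real_inner_comm] at this ⊢
    linarith
  have h := (d1 0).inner ℝ (d2 0)
  have he : (fun t => ⟪deriv γ t, deriv (deriv γ) t⟫) = fun _ => (0 : ℝ) := funext h1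
  rw [he] at h
  have := h.unique (hasDerivAt_const 0 (0 : ℝ))
  rw [real_inner_self_eq_norm_sq] at this
  linarith

theorem aux_taylor {E : Type*} [NormedAddCommGroup E] [NormedSpace ℝ E] (γ : ℝ → E)
    (hγ : ContDiff ℝ (⊤ : ℕ∞) γ) :
    ∃ C, ∀ s ∈ Set.Icc (0 : ℝ) 1, ‖γ s - γ 0 - (s • deriv γ 0 + (s ^ 2 / 2) • deriv (deriv γ) 0
      + (s ^ 3 / 6) • deriv (deriv (deriv γ)) 0)‖ ≤ C * s ^ 4 := by
  obtain ⟨C, hC⟩ := exists_taylor_mean_remainder_bound (f := γ) (n := 3) (zero_le_one' ℝ)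
    ((contDiff_infty.1 hγ 4).contDiffOn)
  refine ⟨C, fun s hs => ?_⟩
  have := hC s hs
  have hk : ∀ k : ℕ, iteratedDerivWithin k γ (Set.Icc 0 1) 0 = iteratedDeriv k γ 0 := by
    intro k
    exact iteratedDerivWithin_eq_iteratedDeriv (uniqueDiffOn_Icc zero_lt_one)
      ((contDiff_infty.1 hγ k).contDiffAt) (by simp)
  simp only [taylorWithinEval_succ, taylor_within_zero_eval, hk, iteratedDeriv_succ,
    iteratedDeriv_zero] at this
  norm_num [Nat.factorial] at this
  convert this using 2
  module

open Filter Topology Asymptotics in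
theorem aux_w {E : Type*} [NormedAddCommGroup E] [InnerProductSpace ℝ E]
    (v : ℝ → E) (T n g : E) (κ C : ℝ) (hn : ‖n‖ = 1) (hT : ‖T‖ = 1) (hp : ⟪n, T⟫ = 0)
    (hg : ⟪T, g⟫ = - κ ^ 2)
    (hv : ∀ s ∈ Set.Icc (0 : ℝ) 1,
      ‖v s - (s • T + (s ^ 2 / 2) • (κ • n) + (s ^ 3 / 6) • g)‖ ≤ C * s ^ 4) :
    (fun s => ⟪n, v s⟫ - κ * s ^ 2 / 2) =O[𝓝[>] 0] (fun s : ℝ => s ^ 3) ∧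
    (fun s => ‖v s - ⟪n, v s⟫ • n‖ - (s - κ ^ 2 * s ^ 3 / 6)) =O[𝓝[>] 0] (fun s : ℝ => s ^ 4) := by
  have hI : ∀ δ : ℝ, 0 < δ → ∀ᶠ s in 𝓝[>] (0 : ℝ), s ∈ Set.Ioo 0 δ := fun δ hδ =>
    Ioo_mem_nhdsGT hδ
  have hnn : ⟪n, n⟫ = 1 := by rw [real_inner_self_eq_norm_sq, hn]; norm_num
  have hTT : ⟪T, T⟫ = 1 := by rw [real_inner_self_eq_norm_sq, hT]; norm_num
  set e : ℝ → E := fun s => v s - (s • T + (s ^ 2 / 2) • (κ • n) + (s ^ 3 / 6) • g) with he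
  have hve : ∀ s, v s = e s + (s • T + (s ^ 2 / 2) • (κ • n) + (s ^ 3 / 6) • g) := by
    intro s; simp [he]
  have hin : ∀ s, |⟪n, e s⟫| ≤ ‖e s‖ := by
    intro s
    simpa [hn] using abs_real_inner_le_norm n (e s)
  have hinv : ∀ s, ⟪n, v s⟫ = ⟪n, e s⟫ + κ * s ^ 2 / 2 + s ^ 3 / 6 * ⟪n, g⟫ := by
    intro s
    rw [hve]
    simp only [inner_add_right, inner_smul_right, hp, hnn]
    ring
  constructor
  · refine IsBigO.of_bound (|C| + |⟪n, g⟫|) ?_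
    filter_upwards [hI 1 one_pos] with s hs
    have hs0 := hs.1
    have h3 : 0 < s ^ 3 := by positivity
    rw [hinv, Real.norm_eq_abs, Real.norm_eq_abs, abs_of_pos h3]
    have h1 := (hin s).trans (hv s ⟨hs.1.le, hs.2.le⟩)
    have h2 : C * s ^ 4 ≤ |C| * s ^ 3 := by
      have : s ^ 4 ≤ s ^ 3 := pow_le_pow_of_le_one hs.1.le hs.2.le (by norm_num)
      calc C * s ^ 4 ≤ |C| * s ^ 4 := by gcongr; exact le_abs_self C
        _ ≤ _ := by gcongr
    calc |⟪n, e s⟫ + κ * s ^ 2 / 2 + s ^ 3 / 6 * ⟪n, g⟫ - κ * s ^ 2 / 2|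
        = |⟪n, e s⟫ + s ^ 3 / 6 * ⟪n, g⟫| := by congr 1; ring
      _ ≤ |⟪n, e s⟫| + |s ^ 3 / 6 * ⟪n, g⟫| := abs_add_le _ _
      _ = |⟪n, e s⟫| + s ^ 3 / 6 * |⟪n, g⟫| := by rw [abs_mul, abs_of_pos (by positivity : 0 < s ^ 3 / 6)]
      _ ≤ _ := by nlinarith [abs_nonneg ⟪n, g⟫, mul_nonneg h3.le (abs_nonneg ⟪n, g⟫)]
  · set b : E := g - ⟪n, g⟫ • n with hb
    have hTb : ⟪T, b⟫ = - κ ^ 2 := by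
      have hp' : ⟪T, n⟫ = 0 := by rw [real_inner_comm]; exact hp
      rw [hb, inner_sub_right, inner_smul_right, hg, hp']
      ring
    set K : ℝ := |‖b‖ ^ 2 / 36 - κ ^ 4 / 36| with hK
    refine IsBigO.of_bound (2 * C + 2 * K) ?_
    have hδ : 0 < 1 / (1 + κ ^ 2) := by positivity
    filter_upwards [hI 1 one_pos, hI _ hδ] with s hs hs'
    have hs0 := hs.1
    have h4 : 0 < s ^ 4 := by positivity
    have h1 := hv s ⟨hs.1.le, hs.2.le⟩
    change ‖e s‖ ≤ _ at h1
    rw [Real.norm_eq_abs, Real.norm_eq_abs, abs_of_pos h4]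
    set N : ℝ := ‖s • T + (s ^ 3 / 6) • b‖ with hN
    have hN0 : 0 ≤ N := norm_nonneg _
    set Q : ℝ := s - κ ^ 2 * s ^ 3 / 6 with hQ
    have hdiff : |‖v s - ⟪n, v s⟫ • n‖ - N| ≤ 2 * C * s ^ 4 := by
      refine (abs_norm_sub_norm_le _ _).trans ?_
      have : v s - ⟪n, v s⟫ • n - (s • T + (s ^ 3 / 6) • b) = e s - ⟪n, e s⟫ • n := by
        rw [hinv, hve, hb]; module
      rw [this]
      refine (norm_sub_le _ _).trans ?_
      rw [norm_smul, hn, Real.norm_eq_abs]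
      linarith [hin s]
    have hNsq : N ^ 2 - Q ^ 2 = s ^ 6 * (‖b‖ ^ 2 / 36 - κ ^ 4 / 36) := by
      rw [hN, ← real_inner_self_eq_norm_sq]
      simp only [inner_add_right, inner_add_left, inner_smul_right, inner_smul_left, hTT, hTb,
        real_inner_comm T b, real_inner_self_eq_norm_sq]
      simp only [hQ, conj_trivial]
      ring
    have hks : κ ^ 2 * s ^ 2 ≤ 1 := by
      have h := hs'.2
      rw [lt_div_iff₀ (by positivity)] at h
      nlinarith [hs.2, sq_nonneg κ, mul_nonneg hs0.le (sq_nonneg κ)]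
    have hQs : s / 2 ≤ Q := by
      rw [hQ]; nlinarith
    have hNQ : |N - Q| ≤ 2 * K * s ^ 4 := by
      have : |N - Q| * (N + Q) = s ^ 6 * K := by
        have hA : |N - Q| * |N + Q| = |s ^ 6| * K := by
          rw [hK, ← abs_mul, ← abs_mul, ← hNsq]
          congr 1; ring
        rwa [abs_of_nonneg (by linarith : 0 ≤ N + Q),
          abs_of_pos (by positivity : 0 < s ^ 6)] at hA
      have h5 : |N - Q| * (s / 2) ≤ s ^ 6 * K := by
        rw [← this]; gcongr; linarith
      have hK0 : 0 ≤ K := abs_nonneg _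
      have h6 : s ^ 6 * K ≤ s ^ 5 * K := by
        gcongr ?_ * K
        exact pow_le_pow_of_le_one hs.1.le hs.2.le (by norm_num)
      have h7 : |N - Q| * s ≤ (2 * K * s ^ 4) * s := by nlinarith
      exact le_of_mul_le_mul_right h7 hs0
    calc _ ≤ |‖v s - ⟪n, v s⟫ • n‖ - N| + |N - Q| := abs_sub_le _ _ _
      _ ≤ _ := by linarith

/-- Theorem 3 of the paper (with the exact third-order coefficient): for a smooth
unit-speed curve `γ` in `ℝ^D` with `γ''(0) = κ_y n` for a unit vector `n ⊥ γ'(0)`,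
and a sphere of curvature `κ₀ > 0` (radius `r = 1/κ₀`, center `c = x + r n`)
through `x = γ(0)`, the spherical distance estimate equals
`s − (1/6)(κ_y − κ₀)(κ_y − 2κ₀)s³ + O(s⁴)`. -/
theorem stmt_3 {D : ℕ} (γ : ℝ → EuclideanSpace ℝ (Fin D))
    (hγ : ContDiff ℝ (⊤ : ℕ∞) γ)
    (hunit : ∀ t : ℝ, ‖deriv γ t‖ = 1)
    (x : EuclideanSpace ℝ (Fin D)) (hx : x = γ 0)
    (n : EuclideanSpace ℝ (Fin D)) (hn : ‖n‖ = 1)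
    (hperp : ⟪n, deriv γ 0⟫ = 0)
    (κy : ℝ) (hκy : deriv (deriv γ) 0 = κy • n)
    (κ₀ : ℝ) (hκ₀ : 0 < κ₀)
    (r : ℝ) (hr : r = 1 / κ₀)
    (c : EuclideanSpace ℝ (Fin D)) (hc : c = x + r • n) :
    ∃ C > (0 : ℝ), ∃ ε > (0 : ℝ), ∀ s ∈ Set.Ioo (0 : ℝ) ε,
      |r * Real.arccos (⟪x - c, γ s - c⟫ / (r * ‖γ s - c‖))
          - (s - (1 / 6) * (κy - κ₀) * (κy - 2 * κ₀) * s ^ 3)| ≤ C * s ^ 4 := by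
  have hrpos : 0 < r := by rw [hr]; positivity
  have hg := aux_unit γ hγ hunit
  rw [hκy, norm_smul, hn, mul_one, Real.norm_eq_abs, sq_abs] at hg
  obtain ⟨C, hC⟩ := aux_taylor γ hγ
  rw [hκy] at hC
  obtain ⟨ha, hw⟩ := aux_w (fun s => γ s - γ 0) (deriv γ 0) n _ κy C hn (hunit 0) hperp hg hC
  obtain ⟨hO, hpos⟩ := aux_scalar κy κ₀ r hκ₀ hr _ _ (fun s => norm_nonneg _) ha hw
  obtain ⟨C', hC'pos, hC'⟩ := hO.exists_pos
  have hev := hC'.bound.and hpos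
  rw [Filter.Eventually, mem_nhdsGT_iff_exists_Ioo_subset] at hev
  obtain ⟨ε, hε, hsub⟩ := hev
  refine ⟨C', hC'pos, ε, hε, fun s hs => ?_⟩
  obtain ⟨hb, hp⟩ := hsub hs
  have hs0 : 0 < s := hs.1
  simp only [Real.norm_eq_abs] at hb
  rw [abs_of_pos (by positivity : 0 < s ^ 4)] at hb
  convert hb using 5
  have hnn : ⟪n, n⟫ = 1 := by rw [real_inner_self_eq_norm_sq, hn]; norm_num
  set v := γ s - γ 0 with hv
  set a := ⟪n, v⟫ with ha'
  set w := ‖v - a • n‖ with hw'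
  have h1 : x - c = - (r • n) := by rw [hc]; abel
  have h2 : γ s - c = (v - a • n) + (-(r - a)) • n := by rw [hc, hx, hv]; module
  have h0 : ⟪v - a • n, n⟫ = 0 := by
    rw [inner_sub_left, inner_smul_left, hnn, real_inner_comm, ← ha']; simp
  have h3 : ‖γ s - c‖ = (r - a) * √(1 + (w / (r - a)) ^ 2) := by
    have : ‖γ s - c‖ ^ 2 = w ^ 2 + (r - a) ^ 2 := by
      rw [h2, norm_add_sq_real, inner_smul_right, h0, norm_smul, hn, Real.norm_eq_abs, mul_one, sq_abs]
      ring
    rw [← Real.sqrt_sq (norm_nonneg (γ s - c)), this]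
    nth_rewrite 2 [← Real.sqrt_sq hp.le]
    rw [← Real.sqrt_mul (sq_nonneg _)]
    congr 1
    field_simp
    ring
  have h4 : ⟪x - c, γ s - c⟫ = r * (r - a) := by
    rw [h1, h2, inner_neg_left, inner_smul_left, inner_add_right, inner_smul_right, hnn,
      real_inner_comm, h0]
    simp
    ring
  rw [Real.arctan_eq_arccos (div_nonneg (norm_nonneg _) hp.le), h3, h4, ← hw']
  congr 1
  have : 0 < √(1 + (w / (r - a)) ^ 2) := by positivity
  field_simp
end

section
/- Let γ : ℝ → ℝ^D be a smooth (C^∞) curve parametrized by arc length, i.e. ‖γ'(t)‖ = 1 for all t, set x = γ(0), and let n be a unit vector with ⟨n, γ'(0)⟩ = 0 such that γ''(0) = κ_y · n for some κ_y ∈ ℝ. Fix κ₀ > 0, let r = 1/κ₀ and c = x + r n. If κ_y = κ₀ or κ_y = 2κ₀, then there exist constants C > 0 and ε > 0 such that for all s ∈ (0, ε), | r·arccos( ⟨x − c, γ(s) − c⟩ / (r ‖γ(s) − c‖) ) − s | ≤ C s⁴. -/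
open RealInnerProductSpace

lemma aux_arctan_lip (u v : ℝ) : |Real.arctan u - Real.arctan v| ≤ |u - v| := by
  have := Convex.norm_image_sub_le_of_norm_hasDerivWithin_le (s := Set.univ) (x := v) (y := u)
    (f := Real.arctan) (f' := fun x => 1 / (1 + x ^ 2)) (C := 1)
    (fun x _ => (Real.hasDerivAt_arctan x).hasDerivWithinAt)
    (fun x _ => by
      rw [Real.norm_eq_abs, abs_of_nonneg (by positivity), div_le_one (by positivity)]
      nlinarith [sq_nonneg x]) convex_univ trivial trivial
  simpa using this

lemma aux_arctan_taylor (t : ℝ) (h0 : 0 ≤ t) (h1 : t ≤ 1) :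
    |Real.arctan (t + t ^ 3 / 3) - t| ≤ t ^ 4 := by
  have := Convex.norm_image_sub_le_of_norm_hasDerivWithin_le (s := Set.Icc 0 t) (x := 0) (y := t)
    (f := fun t => Real.arctan (t + t ^ 3 / 3) - t)
    (f' := fun t => 1 / (1 + (t + t ^ 3 / 3) ^ 2) * (1 + t ^ 2) - 1) (C := t ^ 4)
    (fun x _ => by
      have h : HasDerivAt (fun t : ℝ => t + t ^ 3 / 3) (1 + x ^ 2) x := by
        refine ((hasDerivAt_id' x).add ((hasDerivAt_pow 3 x).div_const 3)).congr_deriv ?_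
        norm_num
      exact (h.arctan.sub (hasDerivAt_id x)).hasDerivWithinAt)
    (fun x hx => by
      have hx0 := hx.1
      have hx1 := hx.2
      have e : 1 / (1 + (x + x ^ 3 / 3) ^ 2) * (1 + x ^ 2) - 1
          = -((2 / 3 * x ^ 4 + x ^ 6 / 9) / (1 + (x + x ^ 3 / 3) ^ 2)) := by
        have : (1 + (x + x ^ 3 / 3) ^ 2) ≠ 0 := by positivity
        field_simp
        ring
      rw [Real.norm_eq_abs, e, abs_neg, abs_of_nonneg (by positivity)]
      have h2 : (2 / 3 * x ^ 4 + x ^ 6 / 9) ≤ x ^ 4 := by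
        have : x ^ 6 ≤ x ^ 4 := pow_le_pow_of_le_one hx0 (hx1.trans h1) (by norm_num)
        have : 0 ≤ x ^ 4 := by positivity
        linarith
      have h3 : x ^ 4 ≤ t ^ 4 := pow_le_pow_left₀ hx0 hx1 4
      refine (div_le_self (by positivity) ?_).trans (h2.trans h3)
      nlinarith [sq_nonneg (x + x ^ 3 / 3)]) (convex_Icc 0 t)
      (Set.left_mem_Icc.2 h0) (Set.right_mem_Icc.2 h0)
  simp only [Real.norm_eq_abs] at this
  norm_num at this
  refine this.trans ?_
  rw [abs_of_nonneg h0]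
  have : 0 ≤ t ^ 4 := by positivity
  nlinarith

lemma aux_scalar_s4 (κ κ₀ r K : ℝ) (hκ₀ : 0 < κ₀) (hr : r = 1 / κ₀) (hK : 0 ≤ K)
    (hc : κ = κ₀ ∨ κ = 2 * κ₀) :
    ∃ C > (0 : ℝ), ∃ ε > (0 : ℝ), ε ≤ 1 ∧ ∀ s ∈ Set.Ioo (0 : ℝ) ε, ∀ e₁ e₂ h B : ℝ,
      |e₁| ≤ K → |e₂| ≤ K → h = κ * s ^ 2 / 2 + s ^ 3 * e₁ →
      B = s ^ 2 - κ ^ 2 * s ^ 4 / 12 + s ^ 5 * e₂ - h ^ 2 → 0 ≤ B →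
      0 < r - h ∧ |r * Real.arctan (√B / (r - h)) - s| ≤ C * s ^ 4 := by
  have hrpos : 0 < r := by rw [hr]; positivity
  have hrk : r * κ₀ = 1 := by rw [hr]; field_simp
  have hq : κ ^ 2 - 3 * κ₀ * κ + 2 * κ₀ ^ 2 = 0 := by
    rcases hc with h | h <;> rw [h] <;> ring
  let P : ℝ × ℝ × ℝ → ℝ := fun p =>
    let s := p.1
    let e₁ := p.2.1
    let e₂ := p.2.2
    let w := κ₀ * (κ / 2 + s * e₁)
    let z := κ₀ ^ 2 / 3
    e₂ - κ * e₁ - s * e₁ ^ 2 + 2 * κ₀ * e₁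
      - s * (w ^ 2 + z ^ 2 - 4 * w * z + s ^ 2 * (-2 * w * z ^ 2 + 2 * w ^ 2 * z)
        + s ^ 4 * w ^ 2 * z ^ 2)
  have hP : Continuous P := by
    simp only [P]
    fun_prop
  obtain ⟨M, hM⟩ := ((isCompact_Icc (a := (0 : ℝ)) (b := 1)).prod
    ((isCompact_Icc (a := -K) (b := K)).prod
      (isCompact_Icc (a := -K) (b := K)))).exists_bound_of_continuousOn hP.continuousOn
  have hM0 : 0 ≤ M := (norm_nonneg _).trans (hM (0, 0, 0) (by simp [hK]))
  let H := |κ| / 2 + K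
  have hH : 0 ≤ H := by positivity
  refine ⟨4 * M + r * κ₀ ^ 4 + 1, by positivity, min 1 (min r (r / (2 * (H + 1)))),
    by positivity, min_le_left _ _, ?_⟩
  rintro s ⟨hs0, hs⟩ e₁ e₂ h B he₁ he₂ hh hB hB0
  rw [lt_min_iff, lt_min_iff] at hs
  obtain ⟨hs1, hsr, hsH⟩ := hs
  rw [lt_div_iff₀ (by positivity)] at hsH
  have hhb : h ≤ r / 2 := by
    have h1 : κ * s ^ 2 / 2 ≤ |κ| / 2 * s := by
      have : κ * s ^ 2 ≤ |κ| * s ^ 2 := by gcongr; exact le_abs_self κ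
      have : |κ| * s ^ 2 ≤ |κ| * s := by gcongr; nlinarith
      linarith
    have h2 : s ^ 3 * e₁ ≤ s * K := by
      have : s ^ 3 * e₁ ≤ s ^ 3 * K := by gcongr; exact (le_abs_self _).trans he₁
      have : s ^ 3 * K ≤ s * K := by gcongr; exact pow_le_of_le_one hs0.le hs1.le (by norm_num)
      linarith
    have h3 : s * (2 * (H + 1)) = 2 * (|κ| / 2 * s + s * K) + 2 * s := by simp only [H]; ring
    linarith
  have ha : r / 2 ≤ r - h := by linarith
  have ha0 : 0 < r - h := by linarith
  refine ⟨ha0, ?_⟩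
  set a := r - h with hadef
  set t := κ₀ * s with ht
  have ht0 : 0 < t := by positivity
  have ht1 : t ≤ 1 := by rw [ht, ← hrk, mul_comm]; gcongr
  set A := a * (t + t ^ 3 / 3) with hA
  have hrt : r * t = s := by rw [ht, ← mul_assoc, hrk, one_mul]
  have hAs : s / 2 ≤ A := by
    have : r / 2 * t ≤ a * (t + t ^ 3 / 3) := by
      gcongr
      have : 0 ≤ t ^ 3 := by positivity
      linarith
    linarith
  have key : B - A ^ 2 = s ^ 5 * P (s, e₁, e₂) := by
    have hA' : A = (1 - κ₀ * h) * (s + κ₀ ^ 2 * s ^ 3 / 3) := by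
      rw [hA, hadef, ht]
      linear_combination (s + κ₀ ^ 2 * s ^ 3 / 3) * hrk
    rw [hA', hB, hh]
    simp only [P]
    linear_combination (-s ^ 4 / 3) * hq
  have hPM : |P (s, e₁, e₂)| ≤ M := hM (s, e₁, e₂)
    ⟨⟨hs0.le, hs1.le⟩, abs_le.1 he₁, abs_le.1 he₂⟩
  have hsq : √B ^ 2 = B := Real.sq_sqrt hB0
  have hsB := Real.sqrt_nonneg B
  have h1 : |√B - A| ≤ 2 * M * s ^ 4 := by
    have e : |√B - A| * (√B + A) = s ^ 5 * |P (s, e₁, e₂)| := by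
      rw [← abs_of_nonneg (show 0 ≤ √B + A by linarith), ← abs_mul,
        ← abs_of_nonneg (show 0 ≤ s ^ 5 by positivity), ← abs_mul, ← key]
      congr 1
      linear_combination hsq
    have e2 : |√B - A| * (s / 2) ≤ |√B - A| * (√B + A) := by gcongr; linarith
    have e3 : s ^ 5 * |P (s, e₁, e₂)| ≤ s ^ 5 * M := by gcongr
    have e4 : |√B - A| * (s / 2) ≤ (2 * M * s ^ 4) * (s / 2) := by
      calc _ ≤ s ^ 5 * M := by linarith
        _ = _ := by ring
    exact le_of_mul_le_mul_right e4 (by positivity)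
  have h2 : |√B / a - (t + t ^ 3 / 3)| ≤ 4 * M * s ^ 4 / r := by
    have e : √B / a - (t + t ^ 3 / 3) = (√B - A) / a := by rw [hA]; field_simp
    rw [e, abs_div, abs_of_pos ha0, div_le_div_iff₀ ha0 hrpos]
    calc |√B - A| * r ≤ (2 * M * s ^ 4) * (2 * a) := by gcongr; linarith
      _ = _ := by ring
  have h3 := (aux_arctan_lip (√B / a) (t + t ^ 3 / 3)).trans h2
  have h4 := aux_arctan_taylor t ht0.le ht1
  have h5 : |Real.arctan (√B / a) - t| ≤ 4 * M * s ^ 4 / r + t ^ 4 :=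
    (abs_sub_le _ _ _).trans (add_le_add h3 h4)
  have e : r * Real.arctan (√B / a) - s = r * (Real.arctan (√B / a) - t) := by
    rw [mul_sub, hrt]
  rw [e, abs_mul, abs_of_pos hrpos]
  calc r * |Real.arctan (√B / a) - t| ≤ r * (4 * M * s ^ 4 / r + t ^ 4) := by gcongr
    _ = (4 * M + r * κ₀ ^ 4) * s ^ 4 := by rw [ht]; field_simp
    _ ≤ _ := mul_le_mul_of_nonneg_right (by linarith) (by positivity)

lemma aux_taylor_s4 {D : ℕ} (γ : ℝ → EuclideanSpace ℝ (Fin D)) (hγ : ContDiff ℝ (⊤ : ℕ∞) γ) :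
    ∃ M : ℝ, 0 ≤ M ∧ ∀ s ∈ Set.Ioo (0 : ℝ) 1, ∃ ρ : EuclideanSpace ℝ (Fin D), ‖ρ‖ ≤ M ∧
      γ s - γ 0 = s • deriv γ 0 + (s ^ 2 / 2) • deriv (deriv γ) 0
        + (s ^ 3 / 6) • deriv (deriv (deriv γ)) 0 + s ^ 4 • ρ := by
  obtain ⟨M, hM⟩ := exists_taylor_mean_remainder_bound (f := γ) (n := 3) (zero_le_one' ℝ)
    (contDiff_infty.mp hγ 4).contDiffOn
  refine ⟨|M|, abs_nonneg _, fun s hs => ?_⟩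
  have hMs := hM s ⟨hs.1.le, hs.2.le⟩
  have hi : ∀ k : ℕ, iteratedDerivWithin k γ (Set.Icc 0 1) 0 = iteratedDeriv k γ 0 := fun k =>
    iteratedDerivWithin_eq_iteratedDeriv (uniqueDiffOn_Icc zero_lt_one)
      (contDiff_infty.mp hγ k).contDiffAt (by simp)
  rw [taylor_within_apply] at hMs
  simp only [hi, iteratedDeriv_eq_iterate] at hMs
  simp only [Finset.sum_range_succ, Finset.sum_range_zero] at hMs
  have hs4 : 0 < s ^ 4 := by have := hs.1; positivity
  refine ⟨(s ^ 4)⁻¹ • (γ s - γ 0 - (s • deriv γ 0 + (s ^ 2 / 2) • deriv (deriv γ) 0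
        + (s ^ 3 / 6) • deriv (deriv (deriv γ)) 0)), ?_, ?_⟩
  · rw [norm_smul, norm_inv, Real.norm_of_nonneg hs4.le, inv_mul_le_iff₀ hs4]
    refine le_trans (le_of_eq ?_) (hMs.trans ?_)
    · congr 1
      simp [Nat.factorial]
      module
    · simp only [sub_zero]
      rw [mul_comm]
      gcongr
      exact le_abs_self M
  · rw [smul_smul, mul_inv_cancel₀ hs4.ne', one_smul]
    abel

lemma aux_third {D : ℕ} (γ : ℝ → EuclideanSpace ℝ (Fin D)) (hγ : ContDiff ℝ (⊤ : ℕ∞) γ)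
    (hunit : ∀ t : ℝ, ‖deriv γ t‖ = 1) :
    ⟪deriv (deriv (deriv γ)) 0, deriv γ 0⟫ = - ‖deriv (deriv γ) 0‖ ^ 2 := by
  have hd1 := (contDiff_infty_iff_deriv.mp hγ).2
  have hd2 := (contDiff_infty_iff_deriv.mp hd1)
  have hd3 := (contDiff_infty_iff_deriv.mp hd2.2)
  have h1 : ∀ t, HasDerivAt (deriv γ) (deriv (deriv γ) t) t := fun t => (hd2.1 t).hasDerivAt
  have h2 : ∀ t, HasDerivAt (deriv (deriv γ)) (deriv (deriv (deriv γ)) t) t :=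
    fun t => (hd3.1 t).hasDerivAt
  have z1 : ∀ t, ⟪deriv (deriv γ) t, deriv γ t⟫ = 0 := by
    intro t
    have a := (h1 t).inner ℝ (h1 t)
    have b : (fun t => ⟪deriv γ t, deriv γ t⟫) = fun _ => (1 : ℝ) := by
      funext t
      rw [real_inner_self_eq_norm_sq, hunit, one_pow]
    rw [b] at a
    have := a.unique (hasDerivAt_const t 1)
    rw [real_inner_comm] at this
    linarith
  have a := (h2 0).inner ℝ (h1 0)
  have b : (fun t => ⟪deriv (deriv γ) t, deriv γ t⟫) = fun _ => (0 : ℝ) := funext z1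
  rw [b] at a
  have := a.unique (hasDerivAt_const 0 0)
  rw [real_inner_self_eq_norm_sq] at this
  linarith

/-- Part (1) of Corollary 1 of the paper: if the curvature `κ_y` of the unit-speed
curve `γ` at `x = γ(0)` (in the normal direction `n`) equals `κ₀` or `2κ₀`, where
`κ₀ = 1/r` is the curvature of the approximating sphere of center `c = x + r n`,
then the spherical distance estimate has fourth-order error. -/
theorem stmt_4 {D : ℕ} (γ : ℝ → EuclideanSpace ℝ (Fin D))
    (hγ : ContDiff ℝ (⊤ : ℕ∞) γ)
    (hunit : ∀ t : ℝ, ‖deriv γ t‖ = 1)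
    (x : EuclideanSpace ℝ (Fin D)) (hx : x = γ 0)
    (n : EuclideanSpace ℝ (Fin D)) (hn : ‖n‖ = 1)
    (hperp : ⟪n, deriv γ 0⟫ = 0)
    (κy : ℝ) (hκy : deriv (deriv γ) 0 = κy • n)
    (κ₀ : ℝ) (hκ₀ : 0 < κ₀)
    (r : ℝ) (hr : r = 1 / κ₀)
    (c : EuclideanSpace ℝ (Fin D)) (hc : c = x + r • n)
    (hcase : κy = κ₀ ∨ κy = 2 * κ₀) :
    ∃ C > (0 : ℝ), ∃ ε > (0 : ℝ), ∀ s ∈ Set.Ioo (0 : ℝ) ε,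
      |r * Real.arccos (⟪x - c, γ s - c⟫ / (r * ‖γ s - c‖)) - s| ≤ C * s ^ 4 := by
  subst hx
  obtain ⟨M, hM0, hM⟩ := aux_taylor_s4 γ hγ
  have hJ := aux_third γ hγ hunit
  have hT := hunit 0
  rw [hκy, norm_smul, hn, mul_one, Real.norm_eq_abs, sq_abs] at hJ
  simp only [hκy] at hM
  generalize deriv (deriv (deriv γ)) 0 = J at *
  generalize deriv γ 0 = T at *
  let F₁ : ℝ × EuclideanSpace ℝ (Fin D) → ℝ := fun p => ⟪n, J⟫ / 6 + p.1 * ⟪n, p.2⟫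
  let F₂ : ℝ × EuclideanSpace ℝ (Fin D) → ℝ := fun p =>
    p.1 * ‖J‖ ^ 2 / 36 + p.1 ^ 3 * ‖p.2‖ ^ 2 + 2 * ⟪T, p.2⟫ + κy / 6 * ⟪n, J⟫
      + p.1 * κy * ⟪n, p.2⟫ + p.1 ^ 2 / 3 * ⟪J, p.2⟫
  have hF₁ : Continuous F₁ := by simp only [F₁]; fun_prop
  have hF₂ : Continuous F₂ := by simp only [F₂]; fun_prop
  have hcpt := (isCompact_Icc (a := (0 : ℝ)) (b := 1)).prod
    (isCompact_closedBall (0 : EuclideanSpace ℝ (Fin D)) M)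
  obtain ⟨K₁, hK₁⟩ := hcpt.exists_bound_of_continuousOn hF₁.continuousOn
  obtain ⟨K₂, hK₂⟩ := hcpt.exists_bound_of_continuousOn hF₂.continuousOn
  obtain ⟨C, hC, ε, hε, hε1, hmain⟩ := aux_scalar_s4 κy κ₀ r (max |K₁| |K₂|) hκ₀ hr
    (le_max_of_le_left (abs_nonneg _)) hcase
  have hrpos : 0 < r := by rw [hr]; positivity
  refine ⟨C, hC, ε, hε, fun s hs => ?_⟩
  have hs01 : s ∈ Set.Ioo (0 : ℝ) 1 := ⟨hs.1, hs.2.trans_le hε1⟩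
  obtain ⟨ρ, hρ, hy⟩ := hM s hs01
  have hmem : (s, ρ) ∈ Set.Icc (0 : ℝ) 1 ×ˢ Metric.closedBall 0 M :=
    ⟨⟨hs01.1.le, hs01.2.le⟩, by simpa using hρ⟩
  have hb₁ : |F₁ (s, ρ)| ≤ max |K₁| |K₂| :=
    (hK₁ _ hmem).trans ((le_abs_self _).trans (le_max_left _ _))
  have hb₂ : |F₂ (s, ρ)| ≤ max |K₁| |K₂| :=
    (hK₂ _ hmem).trans ((le_abs_self _).trans (le_max_right _ _))
  set y := γ s - γ 0 with hydef
  have hnn : ⟪n, n⟫ = 1 := by rw [real_inner_self_eq_norm_sq, hn, one_pow]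
  have hTT : ⟪T, T⟫ = 1 := by rw [real_inner_self_eq_norm_sq, hT, one_pow]
  have hh : ⟪n, y⟫ = κy * s ^ 2 / 2 + s ^ 3 * F₁ (s, ρ) := by
    rw [hy]
    simp only [inner_add_right, inner_smul_right, hperp, hnn, F₁]
    ring
  have hN : ⟪y, y⟫ = s ^ 2 - κy ^ 2 * s ^ 4 / 12 + s ^ 5 * F₂ (s, ρ) := by
    rw [hy]
    simp only [inner_add_right, inner_add_left, inner_smul_right, real_inner_smul_left, F₂]
    rw [real_inner_comm n T, real_inner_comm n J, real_inner_comm n ρ, real_inner_comm J T,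
      real_inner_comm J ρ, real_inner_comm T ρ]
    simp only [← real_inner_self_eq_norm_sq, hperp, hnn, hTT, hJ]
    ring
  have hB0 : 0 ≤ ⟪y, y⟫ - ⟪n, y⟫ ^ 2 := by
    have := real_inner_mul_inner_self_le n y
    rw [hnn] at this
    nlinarith
  obtain ⟨ha, hfin⟩ := hmain s hs _ _ _ (⟪y, y⟫ - ⟪n, y⟫ ^ 2) hb₁ hb₂ hh (by rw [hN]) hB0
  have hp : γ s - c = y - r • n := by rw [hc, hydef]; abel
  have hxc : γ 0 - c = - (r • n) := by rw [hc]; abel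
  have hnum : ⟪γ 0 - c, γ s - c⟫ = r * (r - ⟪n, y⟫) := by
    rw [hp, hxc]
    simp only [inner_neg_left, inner_sub_right, inner_smul_right, real_inner_smul_left, hnn]
    ring
  have hpp : ‖γ s - c‖ ^ 2 = (⟪y, y⟫ - ⟪n, y⟫ ^ 2) + (r - ⟪n, y⟫) ^ 2 := by
    rw [← real_inner_self_eq_norm_sq, hp]
    simp only [inner_sub_left, inner_sub_right, inner_smul_right, real_inner_smul_left, hnn]
    rw [real_inner_comm n y]
    ring
  rw [hnum, mul_div_mul_left _ _ hrpos.ne']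
  have hp0' : 0 ≤ ‖γ s - c‖ := norm_nonneg _
  generalize ‖γ s - c‖ = p at *
  have hp0 : 0 < p := by
    rcases hp0'.eq_or_lt with h | h
    · rw [← h] at hpp
      nlinarith [pow_pos ha 2]
    · exact h
  rw [Real.arccos_eq_arctan (by positivity)]
  have e1 : 1 - ((r - ⟪n, y⟫) / p) ^ 2 = (⟪y, y⟫ - ⟪n, y⟫ ^ 2) / p ^ 2 := by
    rw [eq_div_iff (by positivity), sub_mul, div_pow, div_mul_cancel₀ _ (by positivity), one_mul]
    linarith
  rw [e1, Real.sqrt_div hB0, Real.sqrt_sq hp0.le, div_div_div_cancel_right₀ hp0.ne']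
  exact hfin
end

section
/- Let γ : ℝ → ℝ^D be a smooth (C^∞) curve parametrized by arc length, i.e. ‖γ'(t)‖ = 1 for all t, set x = γ(0), and let n be a unit vector with ⟨n, γ'(0)⟩ = 0 such that γ''(0) = κ_y · n for some κ_y ∈ ℝ. Fix κ₀ > 0, let r = 1/κ₀ and c = x + r n. If |κ_y − κ₀| ≤ δ for some δ ≥ 0, then there exist constants C > 0 and ε > 0 such that for all s ∈ (0, ε), | r·arccos( ⟨x − c, γ(s) − c⟩ / (r ‖γ(s) − c‖) ) − s | ≤ (1/6) δ (δ + κ₀) s³ + C s⁴. -/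
open RealInnerProductSpace
open Filter Asymptotics Topology

lemma arctan_bd (t : ℝ) (ht : 0 ≤ t) : |Real.arctan t - t + t^3/3| ≤ t^5 := by
  have h := Convex.norm_image_sub_le_of_norm_hasDerivWithin_le (𝕜 := ℝ)
    (f := fun t => Real.arctan t - t + t^3/3) (f' := fun t => 1/(1+t^2) - 1 + t^2)
    (s := Set.Icc 0 t) (C := t^4) (x := 0) (y := t) ?_ ?_ (convex_Icc 0 t) ?_ ?_
  · simpa [abs_of_nonneg ht, pow_succ] using h
  · intro y _
    have := (((Real.hasDerivAt_arctan y).sub (hasDerivAt_id y)).add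
      (((hasDerivAt_id y).pow 3).div_const 3))
    refine HasDerivAt.hasDerivWithinAt ?_
    convert this using 1
    · funext z; simp
    · simp
  · rintro y ⟨h0, h1⟩
    have e : 1/(1+y^2) - 1 + y^2 = y^4/(1+y^2) := by field_simp; ring
    simp only [e]
    rw [Real.norm_eq_abs, abs_of_nonneg (by positivity)]
    calc y^4/(1+y^2) ≤ y^4 := div_le_self (by positivity) (by nlinarith)
      _ ≤ t^4 := by gcongr
  · simp [ht]
  · simp [ht]

lemma taylor4 {E : Type*} [NormedAddCommGroup E] [InnerProductSpace ℝ E] (γ : ℝ → E)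
    (hγ : ContDiff ℝ (⊤ : ℕ∞) γ) :
    (fun s => γ s - (γ 0 + s • deriv γ 0 + (s^2/2) • deriv (deriv γ) 0
      + (s^3/6) • deriv (deriv (deriv γ)) 0)) =O[𝓝[>] (0:ℝ)] (fun s => s^4) := by
  obtain ⟨C, hC⟩ := exists_taylor_mean_remainder_bound (f := γ) (a := 0) (b := 1) (n := 3)
    zero_le_one ((contDiff_infty.1 hγ 4).contDiffOn)
  refine IsBigO.of_bound C ?_
  filter_upwards [Ioo_mem_nhdsGT (zero_lt_one)] with s hs
  have := hC s ⟨hs.1.le, hs.2.le⟩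
  have hd : ∀ k : ℕ, iteratedDerivWithin k γ (Set.Icc 0 1) 0 = iteratedDeriv k γ 0 := fun k =>
    iteratedDerivWithin_eq_iteratedDeriv (uniqueDiffOn_Icc zero_lt_one)
      ((contDiff_infty.1 hγ k).contDiffAt) (by simp)
  simp only [taylorWithinEval_succ, taylor_within_zero_eval, hd, iteratedDeriv_succ, iteratedDeriv_zero] at this
  norm_num [Nat.factorial] at this
  rw [Real.norm_eq_abs, abs_of_nonneg (by have := hs.1; positivity)]
  convert this using 3
  congr 2
  · congr 2; ring
  · congr 1; ring

lemma derivs {E : Type*} [NormedAddCommGroup E] [InnerProductSpace ℝ E] (γ : ℝ → E)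
    (hγ : ContDiff ℝ (⊤ : ℕ∞) γ) (hunit : ∀ t : ℝ, ‖deriv γ t‖ = 1) :
    ⟪deriv γ 0, deriv (deriv (deriv γ)) 0⟫ = - ‖deriv (deriv γ) 0‖^2 := by
  have c1 : ContDiff ℝ (⊤ : ℕ∞) (deriv γ) := (contDiff_infty_iff_deriv.1 hγ).2
  have c2 : ContDiff ℝ (⊤ : ℕ∞) (deriv (deriv γ)) := (contDiff_infty_iff_deriv.1 c1).2
  have d1 : ∀ t, HasDerivAt (deriv γ) (deriv (deriv γ) t) t := fun t =>
    ((contDiff_infty_iff_deriv.1 c1).1 t).hasDerivAt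
  have d2 : ∀ t, HasDerivAt (deriv (deriv γ)) (deriv (deriv (deriv γ)) t) t := fun t =>
    ((contDiff_infty_iff_deriv.1 c2).1 t).hasDerivAt
  have h1 : ∀ t, ⟪deriv γ t, deriv (deriv γ) t⟫ = 0 := by
    intro t
    have h := (d1 t).inner ℝ (d1 t)
    have e : (fun t => ⟪deriv γ t, deriv γ t⟫) = fun _ => (1:ℝ) := by
      funext t; rw [real_inner_self_eq_norm_sq, hunit]; norm_num
    rw [e] at h
    have := h.unique (hasDerivAt_const t 1)
    rw [real_inner_comm (deriv γ t) (deriv (deriv γ) t)] at this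
    linarith
  have h := (d1 0).inner ℝ (d2 0)
  have e : (fun t => ⟪deriv γ t, deriv (deriv γ) t⟫) = fun _ => (0:ℝ) := funext h1
  rw [e] at h
  have := h.unique (hasDerivAt_const 0 0)
  rw [real_inner_self_eq_norm_sq] at this
  linarith

lemma polyO (g : ℝ → ℝ) (hg : Continuous g) (k : ℕ) :
    (fun s => s^k * g s) =O[𝓝[>] (0:ℝ)] (fun s => s^k) := by
  have h1 : g =O[𝓝[>] (0:ℝ)] (fun _ => (1:ℝ)) :=
    ((hg.tendsto 0).mono_left nhdsWithin_le_nhds).isBigO_one ℝ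
  simpa using (isBigO_refl (fun s : ℝ => s^k) (𝓝[>] (0:ℝ))).mul h1

lemma powO {m k : ℕ} (h : k ≤ m) :
    (fun s : ℝ => s^m) =O[𝓝[>] (0:ℝ)] (fun s => s^k) := by
  refine (polyO (fun s => s^(m-k)) (by fun_prop) k).congr_left fun s => ?_
  rw [← pow_add]; congr 1; omega

lemma scalar (A P : ℝ → ℝ) (κ κ₀ : ℝ) (hκ₀ : 0 < κ₀) (hP0 : ∀ s, 0 ≤ P s)
    (hA : (fun s => A s - (1/κ₀ - κ * s^2/2)) =O[𝓝[>] (0:ℝ)] (fun s => s^3))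
    (hP : (fun s => P s^2 - (s^2 - κ^2*s^4/3)) =O[𝓝[>] (0:ℝ)] (fun s => s^5)) :
    (fun s => 1/κ₀ * Real.arctan (P s / A s) - s + (1/6)*(κ-κ₀)*(κ-2*κ₀)*s^3)
      =O[𝓝[>] (0:ℝ)] (fun s => s^4) := by
  have hpos : ∀ᶠ s : ℝ in 𝓝[>] 0, 0 < s := self_mem_nhdsWithin
  -- P
  have hP2 : (fun s => P s - (s - κ^2*s^3/6)) =O[𝓝[>] (0:ℝ)] (fun s => s^4) := by
    have h1 : (fun s => P s^2 - (s - κ^2*s^3/6)^2) =O[𝓝[>] (0:ℝ)] (fun s => s^5) := by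
      refine (hP.sub (polyO (fun s => κ^4 * s/36) (by fun_prop) 5)).congr_left fun s => ?_
      ring
    obtain ⟨C, hC⟩ := h1.bound
    have h2 : ∀ᶠ s : ℝ in 𝓝[>] 0, κ^2*s^2/6 < 1/2 := by
      have : Continuous fun s : ℝ => κ^2*s^2/6 := by fun_prop
      exact (this.tendsto 0).mono_left nhdsWithin_le_nhds |>.eventually_lt_const (by norm_num)
    refine IsBigO.of_bound (2*C) ?_
    filter_upwards [hC, h2, hpos] with s hs h2 h0
    have hp : s/2 ≤ s - κ^2*s^3/6 := by nlinarith
    rw [sq_sub_sq, norm_mul] at hs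
    rw [Real.norm_of_nonneg (by linarith [hP0 s] : 0 ≤ P s + (s - κ^2*s^3/6)),
      Real.norm_of_nonneg (by positivity : 0 ≤ s^5)] at hs
    rw [Real.norm_of_nonneg (by positivity : 0 ≤ s^4)]
    have : s/2 * ‖P s - (s - κ^2*s^3/6)‖ ≤ C * s^5 :=
      (mul_le_mul_of_nonneg_right (by linarith [hP0 s]) (norm_nonneg _)).trans hs
    have h3 : s/2 * ‖P s - (s - κ^2*s^3/6)‖ ≤ s/2 * (2*C*s^4) := by linarith
    exact le_of_mul_le_mul_left h3 (by positivity)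
  -- A bounded below
  have hAt : Tendsto A (𝓝[>] 0) (𝓝 (1/κ₀)) := by
    have h1 : Tendsto (fun s => A s - (1/κ₀ - κ * s^2/2)) (𝓝[>] 0) (𝓝 0) := by
      refine hA.trans_tendsto ?_
      have : Continuous fun s : ℝ => s^3 := by fun_prop
      simpa using (this.tendsto 0).mono_left nhdsWithin_le_nhds
    have h2 : Tendsto (fun s => (1/κ₀ - κ * s^2/2)) (𝓝[>] 0) (𝓝 (1/κ₀)) := by
      have : Continuous fun s : ℝ => (1/κ₀ - κ * s^2/2) := by fun_prop
      simpa using (this.tendsto 0).mono_left nhdsWithin_le_nhds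
    simpa using h1.add h2
  have hApos : ∀ᶠ s : ℝ in 𝓝[>] 0, 0 < A s := hAt.eventually_const_lt (by positivity)
  have hAinv : (fun s => (A s)⁻¹) =O[𝓝[>] (0:ℝ)] (fun _ => (1:ℝ)) :=
    (hAt.inv₀ (by positivity)).isBigO_one ℝ
  -- quotient
  let q : ℝ → ℝ := fun s => κ₀ * (s + (κ*κ₀/2 - κ^2/6)*s^3)
  have hqO : q =O[𝓝[>] (0:ℝ)] (fun s => s^1) := by
    refine (polyO (fun s => κ₀ * (1 + (κ*κ₀/2 - κ^2/6)*s^2)) (by fun_prop) 1).congr_left fun s => ?_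
    simp only [q]; ring
  have ht : (fun s => P s / A s - q s) =O[𝓝[>] (0:ℝ)] (fun s => s^4) := by
    have h1 : (fun s => P s - q s * A s) =O[𝓝[>] (0:ℝ)] (fun s => s^4) := by
      have h2 : (fun s => q s * (A s - (1/κ₀ - κ * s^2/2))) =O[𝓝[>] (0:ℝ)] (fun s => s^4) :=
        (hqO.mul hA).congr_right fun s => by ring
      have h3 := (polyO (fun s => κ₀ * (κ*κ₀/2 - κ^2/6) * κ / 2 * s) (by fun_prop) 4)
      refine ((hP2.sub h2).add h3).congr_left fun s => ?_
      simp only [q]; field_simp; ring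
    have h2 : (fun s => (P s - q s * A s) * (A s)⁻¹) =O[𝓝[>] (0:ℝ)] (fun s => s^4) := by
      simpa using h1.mul hAinv
    refine h2.congr' ?_ EventuallyEq.rfl
    filter_upwards [hApos] with s hs
    field_simp
  have htO : (fun s => P s / A s) =O[𝓝[>] (0:ℝ)] (fun s => s^1) := by
    refine ((ht.trans (powO (by norm_num : 1 ≤ 4))).add hqO).congr_left fun s => ?_
    ring
  have ht3 : (fun s => (P s / A s)^3 - κ₀^3*s^3) =O[𝓝[>] (0:ℝ)] (fun s => s^4) := by
    have h1 : (fun s => (P s / A s)^2 + P s / A s * q s + q s^2) =O[𝓝[>] (0:ℝ)] (fun s => s^0) := by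
      have := (((htO.pow 2).add ((htO.mul hqO).congr_right fun s => by ring)).add (hqO.pow 2))
      refine this.trans ?_
      exact (powO (by norm_num : 0 ≤ 2)).congr_left fun s => by ring
    have h2 := ht.mul h1
    have h3 := polyO (fun s => κ₀^3 * s * (3*(κ*κ₀/2 - κ^2/6) + 3*(κ*κ₀/2 - κ^2/6)^2*s^2
      + (κ*κ₀/2 - κ^2/6)^3*s^4)) (by fun_prop) 4
    refine (IsBigO.add (h2.congr_right fun s => by ring) h3).congr_left fun s => ?_
    simp only [q]; ring
  have hat : (fun s => Real.arctan (P s / A s) - P s / A s + (P s / A s)^3/3)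
      =O[𝓝[>] (0:ℝ)] (fun s => s^4) := by
    have h1 : (fun s => Real.arctan (P s / A s) - P s / A s + (P s / A s)^3/3)
      =O[𝓝[>] (0:ℝ)] (fun s => (P s / A s)^5) := by
      refine IsBigO.of_bound 1 ?_
      filter_upwards [hApos] with s hs
      have h0 : 0 ≤ P s / A s := div_nonneg (hP0 s) hs.le
      rw [one_mul, Real.norm_eq_abs, Real.norm_of_nonneg (by positivity)]
      exact arctan_bd _ h0
    refine h1.trans ((htO.pow 5).trans ?_)
    exact (powO (by norm_num : 4 ≤ 5)).congr_left fun s => by ring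
  refine (((hat.add ht).sub (ht3.const_mul_left (1/3))).const_mul_left (1/κ₀)).congr_left fun s => ?_
  simp only [q]; field_simp; ring

theorem stmt_5 {D : ℕ} (γ : ℝ → EuclideanSpace ℝ (Fin D))
    (hγ : ContDiff ℝ (⊤ : ℕ∞) γ)
    (hunit : ∀ t : ℝ, ‖deriv γ t‖ = 1)
    (x : EuclideanSpace ℝ (Fin D)) (hx : x = γ 0)
    (n : EuclideanSpace ℝ (Fin D)) (hn : ‖n‖ = 1)
    (hperp : ⟪n, deriv γ 0⟫ = 0)
    (κy : ℝ) (hκy : deriv (deriv γ) 0 = κy • n)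
    (κ₀ : ℝ) (hκ₀ : 0 < κ₀)
    (r : ℝ) (hr : r = 1 / κ₀)
    (c : EuclideanSpace ℝ (Fin D)) (hc : c = x + r • n)
    (δ : ℝ) (hδ : 0 ≤ δ) (hclose : |κy - κ₀| ≤ δ) :
    ∃ C > (0 : ℝ), ∃ ε > (0 : ℝ), ∀ s ∈ Set.Ioo (0 : ℝ) ε,
      |r * Real.arccos (⟪x - c, γ s - c⟫ / (r * ‖γ s - c‖)) - s|
        ≤ (1 / 6) * δ * (δ + κ₀) * s ^ 3 + C * s ^ 4 := by
  have hr0 : 0 < r := by rw [hr]; positivity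
  have hT := taylor4 γ hγ
  have hJ := derivs γ hγ hunit
  have hT1 := hunit 0
  rw [hκy, norm_smul, hn, mul_one, Real.norm_eq_abs, sq_abs] at hJ
  rw [hκy] at hT
  generalize deriv (deriv (deriv γ)) 0 = J at *
  generalize deriv γ 0 = T at *
  let u : ℝ → EuclideanSpace ℝ (Fin D) := fun s => s • T + (s^2/2) • κy • n + (s^3/6) • J
  let R : ℝ → EuclideanSpace ℝ (Fin D) := fun s => γ s - γ 0 - u s
  have hR : R =O[𝓝[>] (0:ℝ)] (fun s => s^4) := by
    refine hT.congr_left fun s => ?_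
    simp only [R, u]; abel
  have hv : ∀ s, γ s - x = u s + R s := fun s => by simp only [R, hx]; abel
  have hnn : ⟪n, n⟫ = 1 := by rw [real_inner_self_eq_norm_sq, hn]; norm_num
  have hTT : ⟪T, T⟫ = 1 := by rw [real_inner_self_eq_norm_sq, hT1]; norm_num
  have innO : ∀ (f g : ℝ → EuclideanSpace ℝ (Fin D)) (i j : ℕ),
      f =O[𝓝[>] (0:ℝ)] (fun s => s^i) → g =O[𝓝[>] (0:ℝ)] (fun s => s^j) →
      (fun s => ⟪f s, g s⟫) =O[𝓝[>] (0:ℝ)] (fun s => s^(i+j)) := by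
    intro f g i j hf hg
    have h1 : (fun s => ⟪f s, g s⟫) =O[𝓝[>] (0:ℝ)] (fun s => ‖f s‖ * ‖g s‖) := by
      refine IsBigO.of_bound 1 (Eventually.of_forall fun s => ?_)
      rw [one_mul, norm_mul, norm_norm, norm_norm]
      exact norm_inner_le_norm _ _
    exact (h1.trans (hf.norm_left.mul hg.norm_left)).congr_right fun s => by ring
  have hnc : (fun _ : ℝ => n) =O[𝓝[>] (0:ℝ)] (fun s => s^0) := by
    simpa using isBigO_const_const n (one_ne_zero (α := ℝ)) _
  have huO : u =O[𝓝[>] (0:ℝ)] (fun s => s^1) := by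
    have h1 : (fun s : ℝ => T + (s/2) • κy • n + (s^2/6) • J) =O[𝓝[>] (0:ℝ)] (fun _ => (1:ℝ)) := by
      have : Continuous (fun s : ℝ => T + (s/2) • κy • n + (s^2/6) • J) := by fun_prop
      exact ((this.tendsto 0).mono_left nhdsWithin_le_nhds).isBigO_one ℝ
    have h2 := (isBigO_refl (fun s : ℝ => s^1) (𝓝[>] (0:ℝ))).smul h1
    refine (h2.congr_left fun s => ?_).congr_right fun s => by simp
    simp only [u, smul_add, smul_smul]
    ring_nf
  have hnu : ∀ s, ⟪n, u s⟫ = κy * s^2/2 + s^3/6 * ⟪n, J⟫ := fun s => by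
    simp only [u, inner_add_right, inner_smul_right, hnn, hperp]; ring
  let A : ℝ → ℝ := fun s => r - ⟪n, γ s - x⟫
  let P : ℝ → ℝ := fun s => √(‖γ s - x‖^2 - ⟪n, γ s - x⟫^2)
  have hP2 : ∀ s, P s^2 = ‖γ s - x‖^2 - ⟪n, γ s - x⟫^2 := fun s => by
    refine Real.sq_sqrt ?_
    have h1 := abs_real_inner_le_norm n (γ s - x)
    rw [hn, one_mul] at h1
    have := sq_le_sq' (by linarith [abs_nonneg ⟪n, γ s - x⟫, neg_abs_le ⟪n, γ s - x⟫]) ((le_abs_self _).trans h1)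
    linarith
  have hnR := innO _ _ 0 4 hnc hR
  have hA : (fun s => A s - (1/κ₀ - κy * s^2/2)) =O[𝓝[>] (0:ℝ)] (fun s => s^3) := by
    refine ((polyO (fun _ => -⟪n, J⟫/6) (by fun_prop) 3).sub
      (hnR.trans (powO (by norm_num : 3 ≤ 0+4)))).congr_left fun s => ?_
    simp only [A, hv, inner_add_right, hnu, ← hr]; ring
  have hP : (fun s => P s^2 - (s^2 - κy^2*s^4/3)) =O[𝓝[>] (0:ℝ)] (fun s => s^5) := by
    have h1 := (innO _ _ 1 4 huO hR).const_mul_left 2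
    have h2 := ((innO _ _ 0 1 hnc huO).mul hnR).const_mul_left 2
    have h3 := (innO _ _ 4 4 hR hR).trans (powO (by norm_num : 5 ≤ 4+4))
    have h4 := (hnR.pow 2).trans ((powO (by norm_num : 5 ≤ 8)).congr_left fun s => by ring)
    have h5 := polyO (fun s => s/36 * (⟪J, J⟫ - ⟪n, J⟫^2)) (by fun_prop) 5
    refine ((((h1.sub (h2.congr_right fun s => by ring)).add h3).sub h4).add h5).congr_left fun s => ?_
    have hTn : ⟪T, n⟫ = 0 := by rw [real_inner_comm]; exact hperp
    have hJT : ⟪J, T⟫ = -κy^2 := by rw [real_inner_comm]; exact hJ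
    have hJn : ⟪J, n⟫ = ⟪n, J⟫ := real_inner_comm _ _
    have huu : ⟪u s, u s⟫ = s^2 + κy^2 * s^4/4 - κy^2*s^4/3 + κy*s^5/6*⟪n,J⟫ + s^6/36*⟪J,J⟫ := by
      simp only [u, inner_add_right, inner_add_left, inner_smul_right, real_inner_smul_left, hnn, hperp, hTn,
        hTT, hJ, hJT, hJn]
      ring
    rw [hP2, hv, ← real_inner_self_eq_norm_sq]
    simp only [inner_add_right, inner_add_left, hnu, huu, real_inner_comm (u s) (R s)]
    ring
  have key := scalar A P κy κ₀ hκ₀ (fun s => Real.sqrt_nonneg _) hA hP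
  have hApos : ∀ᶠ s : ℝ in 𝓝[>] 0, 0 < A s := by
    have : Continuous A := by
      have := hγ.continuous
      fun_prop
    exact ((this.tendsto 0).mono_left nhdsWithin_le_nhds).eventually_const_lt (by simp [A, hx, hr0])
  obtain ⟨C, hC0, hC⟩ := key.exists_pos
  obtain ⟨ε, hε, hall⟩ := mem_nhdsGT_iff_exists_Ioo_subset.1 (hC.bound.and hApos)
  refine ⟨C, hC0, ε, hε, fun s hs => ?_⟩
  obtain ⟨h1, h2⟩ := hall hs
  have hs0 : 0 < s := hs.1
  have hgc : γ s - c = (γ s - x) - r • n := by rw [hc]; abel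
  have hN2 : ‖γ s - c‖^2 = A s^2 + P s^2 := by
    rw [hP2, hgc, norm_sub_sq_real, norm_smul, inner_smul_right, hn, real_inner_comm n,
      Real.norm_of_nonneg hr0.le]
    simp only [A]; ring
  have hNpos : 0 < ‖γ s - c‖ := by
    by_contra h
    have : ‖γ s - c‖ = 0 := le_antisymm (not_lt.1 h) (norm_nonneg _)
    rw [this] at hN2
    nlinarith [sq_nonneg (P s)]
  have hin : ⟪x - c, γ s - c⟫ = r * A s := by
    have : x - c = -(r • n) := by rw [hc]; abel
    rw [this, hgc]
    simp only [inner_neg_left, real_inner_smul_left, inner_sub_right, inner_smul_right, hnn, A]; ring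
  have harc : Real.arccos (⟪x - c, γ s - c⟫ / (r * ‖γ s - c‖)) = Real.arctan (P s / A s) := by
    rw [hin, mul_div_mul_left _ _ hr0.ne', Real.arccos_eq_arctan (by positivity)]
    have : 1 - (A s / ‖γ s - c‖)^2 = (P s / ‖γ s - c‖)^2 := by
      field_simp; linarith
    have hPs : 0 ≤ P s := Real.sqrt_nonneg _
    rw [this, Real.sqrt_sq (by positivity)]
    congr 1
    field_simp
  rw [harc, hr]
  rw [Real.norm_eq_abs, Real.norm_of_nonneg (by positivity : 0 ≤ s^4)] at h1
  have h3 : |(1/6)*(κy-κ₀)*(κy-2*κ₀)*s^3| ≤ (1 / 6) * δ * (δ + κ₀) * s ^ 3 := by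
    rw [abs_mul, abs_mul, abs_mul, abs_of_pos (by positivity : (0:ℝ) < s^3),
      abs_of_pos (by norm_num : (0:ℝ) < 1/6)]
    have : |κy - 2*κ₀| ≤ δ + κ₀ := by
      rw [abs_le] at hclose ⊢
      constructor <;> linarith
    gcongr
  calc _ = |(1/κ₀ * Real.arctan (P s / A s) - s + (1/6)*(κy-κ₀)*(κy-2*κ₀)*s^3)
        - (1/6)*(κy-κ₀)*(κy-2*κ₀)*s^3| := by congr 1; ring
    _ ≤ _ := abs_sub _ _
    _ ≤ _ := by linarith
end
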